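/- arXiv:2108.00436 — 3 statements merged into one kernel-verified Lean document; each statement's English description precedes it below -/
import Mathlib

section
/- Let v, s, σ, ω be real numbers and let aₘ : ℝ → ℂ (m ∈ ℤ) be twice differentiable functions satisfying, for every m ∈ ℤ and all x, (1−v²)(aₘ''(x) + 2im·aₘ'(x) − m²·aₘ(x)) − 2iωv(aₘ'(x) + im·aₘ(x)) + (ω² − s)·aₘ(x) − (sσ/2)(aₘ₋₁(x) + aₘ₊₁(x)) = 0. Suppose A : ℝ → ℂ is twice differentiable and for every x the families (aₘ(x)e^{imx})ₘ, ((aₘ'(x)+im·aₘ(x))e^{imx})ₘ and ((aₘ''(x)+2im·aₘ'(x)−m²·aₘ(x))e^{imx})ₘ are summable with A(x) = Σ'ₘ aₘ(x)e^{imx}, A'(x) = Σ'ₘ (aₘ'(x)+im·aₘ(x))e^{imx} and A''(x) = Σ'ₘ (aₘ''(x)+2im·aₘ'(x)−m²·aₘ(x))e^{imx}. Then A satisfies, for all x, (1−v²)·A''(x) − 2iωv·A'(x) + (ω² − s(1+σ·cos x))·A(x) = 0. -/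
/-!
Multiply the `m`-th balance equation by `exp (imx)` and sum over `m`. Reindexing
`m ↦ m ∓ 1` turns the neighbour terms `a (m ∓ 1) x * exp (imx)` into series with sums
`exp (±ix) * A x`, and `exp (ix) + exp (-ix) = 2 cos x` recombines them into the
`cos x` coefficient of the reduced equation.
-/

open Complex

/-- If the amplitudes `aₘ` satisfy the coupled harmonic-balance ODEs and the series
`A(x) = Σₘ aₘ(x)e^{imx}` (together with its first and second derivative series) is
summable with the stated sums, then `A` satisfies the reduced ODE
`(1−v²)A'' − 2iωv A' + (ω² − s(1+σ cos x))A = 0`. -/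
theorem varying_amplitudes_reconstruction (v s σ ω : ℝ) (a : ℤ → ℝ → ℂ)
    (ha : ∀ m : ℤ, Differentiable ℝ (a m))
    (ha' : ∀ m : ℤ, Differentiable ℝ (deriv (a m)))
    (hODE : ∀ (m : ℤ) (x : ℝ),
      (1 - (v : ℂ) ^ 2) *
          (deriv (deriv (a m)) x + 2 * Complex.I * (m : ℂ) * deriv (a m) x
            - (m : ℂ) ^ 2 * a m x)
        - 2 * Complex.I * (ω : ℂ) * (v : ℂ) *
            (deriv (a m) x + Complex.I * (m : ℂ) * a m x)
        + ((ω : ℂ) ^ 2 - (s : ℂ)) * a m x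
        - ((s : ℂ) * (σ : ℂ) / 2) * (a (m - 1) x + a (m + 1) x) = 0)
    (A : ℝ → ℂ)
    (hA : Differentiable ℝ A) (hA' : Differentiable ℝ (deriv A))
    (hsum0 : ∀ x : ℝ, Summable (fun m : ℤ =>
      a m x * Complex.exp (Complex.I * (m : ℂ) * (x : ℂ))))
    (hsum1 : ∀ x : ℝ, Summable (fun m : ℤ =>
      (deriv (a m) x + Complex.I * (m : ℂ) * a m x)
        * Complex.exp (Complex.I * (m : ℂ) * (x : ℂ))))
    (hsum2 : ∀ x : ℝ, Summable (fun m : ℤ =>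
      (deriv (deriv (a m)) x + 2 * Complex.I * (m : ℂ) * deriv (a m) x
          - (m : ℂ) ^ 2 * a m x)
        * Complex.exp (Complex.I * (m : ℂ) * (x : ℂ))))
    (hA_eq : ∀ x : ℝ, A x = ∑' m : ℤ,
      a m x * Complex.exp (Complex.I * (m : ℂ) * (x : ℂ)))
    (hA'_eq : ∀ x : ℝ, deriv A x = ∑' m : ℤ,
      (deriv (a m) x + Complex.I * (m : ℂ) * a m x)
        * Complex.exp (Complex.I * (m : ℂ) * (x : ℂ)))
    (hA''_eq : ∀ x : ℝ, deriv (deriv A) x = ∑' m : ℤ,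
      (deriv (deriv (a m)) x + 2 * Complex.I * (m : ℂ) * deriv (a m) x
          - (m : ℂ) ^ 2 * a m x)
        * Complex.exp (Complex.I * (m : ℂ) * (x : ℂ))) :
    ∀ x : ℝ,
      (1 - (v : ℂ) ^ 2) * deriv (deriv A) x
        - 2 * Complex.I * (ω : ℂ) * (v : ℂ) * deriv A x
        + ((ω : ℂ) ^ 2 - (s : ℂ) * (1 + (σ : ℂ) * (Real.cos x : ℂ))) * A x = 0 := by
  intro x
  have h0 := (hsum0 x).hasSum
  have h1 := (hsum1 x).hasSum
  have h2 := (hsum2 x).hasSum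
  rw [← hA_eq x] at h0
  rw [← hA'_eq x] at h1
  rw [← hA''_eq x] at h2
  have hdown : HasSum (fun m : ℤ =>
      a (m - 1) x * Complex.exp (Complex.I * (m : ℂ) * (x : ℂ)))
      (Complex.exp (Complex.I * (x : ℂ)) * A x) := by
    refine (((Equiv.subRight (1 : ℤ)).hasSum_iff.mpr h0).mul_left
      (Complex.exp (Complex.I * (x : ℂ)))).congr_fun fun m => ?_
    have e : Complex.I * (m : ℂ) * (x : ℂ)
        = Complex.I * (x : ℂ) + Complex.I * ((m - 1 : ℤ) : ℂ) * (x : ℂ) := by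
      push_cast; ring
    simp only [Function.comp_apply, Equiv.subRight_apply]
    rw [e, Complex.exp_add]
    ring
  have hup : HasSum (fun m : ℤ =>
      a (m + 1) x * Complex.exp (Complex.I * (m : ℂ) * (x : ℂ)))
      (Complex.exp (-(Complex.I * (x : ℂ))) * A x) := by
    refine (((Equiv.addRight (1 : ℤ)).hasSum_iff.mpr h0).mul_left
      (Complex.exp (-(Complex.I * (x : ℂ))))).congr_fun fun m => ?_
    have e : Complex.I * (m : ℂ) * (x : ℂ)
        = -(Complex.I * (x : ℂ)) + Complex.I * ((m + 1 : ℤ) : ℂ) * (x : ℂ) := by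
      push_cast; ring
    simp only [Function.comp_apply, Equiv.coe_addRight]
    rw [e, Complex.exp_add]
    ring
  have hcos : 2 * (Real.cos x : ℂ)
      = Complex.exp (Complex.I * (x : ℂ)) + Complex.exp (-(Complex.I * (x : ℂ))) := by
    rw [Complex.ofReal_cos, Complex.two_cos, neg_mul, mul_comm Complex.I]
  have hall := (((h2.mul_left (1 - (v : ℂ) ^ 2)).sub
    (h1.mul_left (2 * Complex.I * (ω : ℂ) * (v : ℂ)))).add
    (h0.mul_left ((ω : ℂ) ^ 2 - (s : ℂ)))).sub
    ((hdown.add hup).mul_left ((s : ℂ) * (σ : ℂ) / 2))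
  -- Each term of the combined series is `exp (imx)` times the `m`-th balance equation.
  have hzero := hall.unique (hasSum_zero.congr_fun fun m => by
    linear_combination Complex.exp (Complex.I * (m : ℂ) * (x : ℂ)) * hODE m x)
  linear_combination hzero - (s : ℂ) * (σ : ℂ) / 2 * A x * hcos
end

section
/- Let v, s be real numbers with 0 < v < 1 and s > 0, and set k₀ = v·√(s/(1−v²)). Then the branch ω₋(k) = vk − √(k² + s) has derivative zero at k₀, k₀ is the unique real number where the derivative of ω₋ vanishes, and the frequency there satisfies ω₋(k₀) = −√(s(1−v²)), so |ω₋(k₀)| equals the cut-off frequency ω_c = √(s(1−v²)). -/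
/-!
Write `q = √(s/(1−v²))`, so that `k₀ = v q` and `q² (1−v²) = s`. Then `k₀² + s = q²`, i.e.
`√(k₀² + s) = q`, which gives both `ω₋'(k₀) = v − k₀/q = 0` and
`ω₋(k₀) = v² q − q = −q (1−v²) = −√(s(1−v²))`. Conversely, if `ω₋'(k) = 0` then `k = v r` with
`r = √(k² + s) > 0`, so `r² (1−v²) = s`, which forces `r = q`.
-/

/-- The group velocity of the branch `ω₋`. Positivity of `s` keeps the radicand away from `0`,
so the branch is differentiable everywhere. -/
theorem hasDerivAt_branch (v s : ℝ) (hs : 0 < s) (k : ℝ) :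
    HasDerivAt (fun k : ℝ => v * k - Real.sqrt (k ^ 2 + s)) (v - k / Real.sqrt (k ^ 2 + s)) k := by
  have hpos : 0 < k ^ 2 + s := by positivity
  have hrad : HasDerivAt (fun k : ℝ => k ^ 2 + s) (2 * k) k := by
    simpa using (hasDerivAt_pow 2 k).add_const s
  have hlin : HasDerivAt (fun k : ℝ => v * k) v k := by
    simpa using (hasDerivAt_id k).const_mul v
  refine (hlin.sub (hrad.sqrt hpos.ne')).congr_deriv ?_
  rw [mul_div_mul_left _ _ two_ne_zero]

/-- For `0 < v < 1`, `s > 0`, the backward branch `ω₋(k) = vk − √(k² + s)` has a unique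
stationary point at the veering point `k₀ = v√(s/(1−v²))`, where the frequency equals
`−√(s(1−v²))`, whose absolute value is the cut-off frequency `ω_c = √(s(1−v²))`. -/
theorem veering_point (v s : ℝ) (hv0 : 0 < v) (hv1 : v < 1) (hs : 0 < s)
    (ωm : ℝ → ℝ) (hωm : ωm = fun k => v * k - Real.sqrt (k ^ 2 + s))
    (k₀ : ℝ) (hk₀ : k₀ = v * Real.sqrt (s / (1 - v ^ 2))) :
    deriv ωm k₀ = 0 ∧
    (∀ k : ℝ, deriv ωm k = 0 → k = k₀) ∧
    ωm k₀ = -Real.sqrt (s * (1 - v ^ 2)) ∧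
    |ωm k₀| = Real.sqrt (s * (1 - v ^ 2)) := by
  have hd : ∀ k, deriv ωm k = v - k / Real.sqrt (k ^ 2 + s) := fun k => by
    rw [hωm]
    exact (hasDerivAt_branch v s hs k).deriv
  have hw : 0 < 1 - v ^ 2 := by nlinarith
  set q := Real.sqrt (s / (1 - v ^ 2)) with hq
  have hq0 : 0 < q := Real.sqrt_pos.mpr (div_pos hs hw)
  have hq2 : q ^ 2 * (1 - v ^ 2) = s := by
    rw [hq, Real.sq_sqrt (div_pos hs hw).le, div_mul_cancel₀ _ hw.ne']
  have hroot : Real.sqrt (k₀ ^ 2 + s) = q := by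
    rw [Real.sqrt_eq_iff_mul_self_eq_of_pos hq0, hk₀]
    linear_combination hq2
  have hcut : Real.sqrt (s * (1 - v ^ 2)) = q * (1 - v ^ 2) := by
    rw [Real.sqrt_eq_iff_mul_self_eq_of_pos (mul_pos hq0 hw)]
    linear_combination (1 - v ^ 2) * hq2
  have hval : ωm k₀ = -Real.sqrt (s * (1 - v ^ 2)) := by
    rw [hcut, hωm]
    simp only [hroot]
    rw [hk₀]
    ring
  refine ⟨?_, fun k hk => ?_, hval, ?_⟩
  · rw [hd, hroot, hk₀, mul_div_cancel_right₀ _ hq0.ne', sub_self]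
  · rw [hd] at hk
    have hr0 : 0 < Real.sqrt (k ^ 2 + s) := Real.sqrt_pos.mpr (by positivity)
    have hr2 : Real.sqrt (k ^ 2 + s) ^ 2 = k ^ 2 + s := Real.sq_sqrt (by positivity)
    set r := Real.sqrt (k ^ 2 + s)
    have hkr : k = v * r := ((eq_div_iff hr0.ne').mp (sub_eq_zero.mp hk)).symm
    have hrq : r ^ 2 = q ^ 2 := by
      apply mul_right_cancel₀ hw.ne'
      linear_combination hr2 - hq2 + (k + v * r) * hkr
    rw [hkr, hk₀, (sq_eq_sq₀ hr0.le hq0.le).mp hrq]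
  · rw [hval, abs_neg, abs_of_nonneg (Real.sqrt_nonneg _)]
end

section
/- Let s₁, s₂ > 0 and v₁ ∈ [0, 1) be real numbers with s₂ ≥ s₁(1 − v₁²), and define v₂ = v₁ + Δv with Δv = (−v₁·s₂ − √(s₂² − (1 − v₁²)·s₁·s₂))/s₂. Then v₂² ≤ 1 and s₂(1 − v₂²) = s₁(1 − v₁²), so the cut-off frequencies agree: √(s₂(1 − v₂²)) = √(s₁(1 − v₁²)). -/
/-- Tuning the axial speed by `Δv = (−v₁s₂ − √(s₂² − (1−v₁²)s₁s₂))/s₂` when the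
stiffness changes from `s₁` to `s₂` keeps the critical frequency of the first band gap
stationary, and the new speed remains subcritical in the sense `v₂² ≤ 1`. -/
theorem velocity_tuning (s₁ s₂ v₁ v₂ Δv : ℝ)
    (hs₁ : 0 < s₁) (hs₂ : 0 < s₂)
    (hv₁0 : 0 ≤ v₁) (hv₁1 : v₁ < 1)
    (hcond : s₂ ≥ s₁ * (1 - v₁ ^ 2))
    (hΔv : Δv = (-v₁ * s₂ - Real.sqrt (s₂ ^ 2 - (1 - v₁ ^ 2) * s₁ * s₂)) / s₂)
    (hv₂ : v₂ = v₁ + Δv) :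
    v₂ ^ 2 ≤ 1 ∧
    s₂ * (1 - v₂ ^ 2) = s₁ * (1 - v₁ ^ 2) ∧
    Real.sqrt (s₂ * (1 - v₂ ^ 2)) = Real.sqrt (s₁ * (1 - v₁ ^ 2)) := by
  have hrad : 0 ≤ s₂ ^ 2 - (1 - v₁ ^ 2) * s₁ * s₂ := by
    have := mul_nonneg hs₂.le (sub_nonneg.mpr hcond)
    linarith
  have hsq := Real.sq_sqrt hrad
  -- The `v₁` terms cancel, leaving `v₂ = -√(s₂² - (1 - v₁²)s₁s₂) / s₂`.
  have hmul : s₂ * v₂ = -Real.sqrt (s₂ ^ 2 - (1 - v₁ ^ 2) * s₁ * s₂) := by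
    rw [hv₂, hΔv]
    field_simp
    ring
  have hfreq : s₂ * (1 - v₂ ^ 2) = s₁ * (1 - v₁ ^ 2) := by
    have hsq' : (s₂ * v₂) ^ 2 = s₂ ^ 2 - (1 - v₁ ^ 2) * s₁ * s₂ := by
      rw [hmul, neg_sq, hsq]
    apply mul_left_cancel₀ hs₂.ne'
    linear_combination -hsq'
  refine ⟨?_, hfreq, by rw [hfreq]⟩
  have hpos : 0 ≤ s₂ * (1 - v₂ ^ 2) := by
    rw [hfreq]
    exact mul_nonneg hs₁.le (by nlinarith)
  linarith [nonneg_of_mul_nonneg_right hpos hs₂]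
end
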